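/- Let d ≥ 2 and let s and t be n-tuples of transpositions in S_d = Equiv.Perm (Fin d), each of which is transitive (the subgroup generated by the entries acts transitively on Fin d). Then s and t are equivalent under the combination of Hurwitz moves and simultaneous conjugation — i.e. there exist a finite composition W of Hurwitz moves H_i and their inverses and an element g ∈ S_d such that W applied to (g s_1 g⁻¹, …, g s_n g⁻¹) equals t — if and only if the total monodromies s_1 s_2 ⋯ s_n and t_1 t_2 ⋯ t_n are conjugate in S_d. (This is the algebraic form of the classification theorem of Mulazzani–Piergallini and Berstein–Edmonds stated in Section 2.1 of the paper: two simple branched covers of the disc are equivalent if and only if their total monodromies are conjugate in S_d.) -/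

import Mathlib

/-- The `i`-th Hurwitz move on `n`-tuples in a group `G` (indices `0`-based:
this acts on the entries at positions `i` and `i+1`): it replaces the pair
`(a, b)` at positions `(i, i+1)` by `(a * b * a⁻¹, a)` and leaves all other
entries unchanged. -/
def hmove {G : Type*} [Group G] {n : ℕ} (i : ℕ) (hi : i + 1 < n) (t : Fin n → G) :
    Fin n → G := fun j =>
  if (j : ℕ) = i then t ⟨i, by omega⟩ * t ⟨i + 1, hi⟩ * (t ⟨i, by omega⟩)⁻¹
  else if (j : ℕ) = i + 1 then t ⟨i, by omega⟩
  else t j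

/-- One elementary Hurwitz step between tuples: applying a single Hurwitz move
or the inverse of a single Hurwitz move. -/
def hstep {G : Type*} [Group G] {n : ℕ} (s t : Fin n → G) : Prop :=
  ∃ (i : ℕ) (hi : i + 1 < n), t = hmove i hi s ∨ s = hmove i hi t

/-- Two tuples are Hurwitz equivalent if some finite composition of Hurwitz
moves and their inverses carries one to the other. -/
def HurwitzEquiv {G : Type*} [Group G] {n : ℕ} (s t : Fin n → G) : Prop :=
  Relation.ReflTransGen hstep s t

set_option linter.unusedSectionVars false

/-- Hurwitz equivalence on lists, presented as a congruence. -/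
inductive Hz {G : Type*} [Group G] : List G → List G → Prop
  | refl (l) : Hz l l
  | symm {l m} : Hz l m → Hz m l
  | trans {l m k} : Hz l m → Hz m k → Hz l k
  | cons (a) {l m} : Hz l m → Hz (a :: l) (a :: m)
  | move (a b v) : Hz (a :: b :: v) ((a * b * a⁻¹) :: a :: v)

section hz
variable {G : Type*} [Group G]

theorem Hz.length {l m : List G} (h : Hz l m) : l.length = m.length := by
  induction h <;> simp_all

theorem Hz.prod {l m : List G} (h : Hz l m) : l.prod = m.prod := by
  induction h <;> simp_all [mul_assoc]

theorem Hz.closure {l m : List G} (h : Hz l m) :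
    Subgroup.closure {x | x ∈ l} = Subgroup.closure {x | x ∈ m} := by
  induction h with
  | refl => rfl
  | symm _ ih => exact ih.symm
  | trans _ _ h1 h2 => exact h1.trans h2
  | @cons a l m h ih =>
    have e : ∀ k : List G, {x | x ∈ a :: k} = {a} ∪ {x | x ∈ k} := by
      intro k; ext; simp
    rw [e, e, Subgroup.closure_union, Subgroup.closure_union, ih]
  | move a b v =>
    apply le_antisymm
    · rw [Subgroup.closure_le]
      intro x hx
      have ha : a ∈ Subgroup.closure {x | x ∈ (a * b * a⁻¹) :: a :: v} :=
        Subgroup.subset_closure (by simp)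
      have hb : a * b * a⁻¹ ∈ Subgroup.closure {x | x ∈ (a * b * a⁻¹) :: a :: v} :=
        Subgroup.subset_closure (by simp)
      simp only [Set.mem_ofPred_eq, List.mem_cons] at hx
      rcases hx with rfl | rfl | hx
      · exact ha
      · have := mul_mem (mul_mem (inv_mem ha) hb) ha
        simpa [mul_assoc] using this
      · exact Subgroup.subset_closure (by simp [hx])
    · rw [Subgroup.closure_le]
      intro x hx
      have ha : a ∈ Subgroup.closure {x | x ∈ a :: b :: v} :=
        Subgroup.subset_closure (by simp)
      have hb : b ∈ Subgroup.closure {x | x ∈ a :: b :: v} :=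
        Subgroup.subset_closure (by simp)
      simp only [Set.mem_ofPred_eq, List.mem_cons] at hx
      rcases hx with rfl | rfl | hx
      · exact mul_mem (mul_mem ha hb) (inv_mem ha)
      · exact ha
      · exact Subgroup.subset_closure (by simp [hx])

theorem Hz.move_inv (a b : G) (v : List G) : Hz (a :: b :: v) (b :: (b⁻¹ * a * b) :: v) := by
  have := Hz.move b (b⁻¹ * a * b) v
  simp only [mul_assoc, mul_inv_cancel, mul_inv_cancel_left, mul_one] at this
  simpa [mul_assoc] using this.symm

/-- move a square-one pair past an entry -/
theorem Hz.pass (a τ : G) (v : List G) (hτ : τ * τ = 1) :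
    Hz (a :: τ :: τ :: v) (τ :: τ :: a :: v) := by
  refine (Hz.move_inv a τ _).trans ((Hz.cons τ (Hz.move_inv _ τ _)).trans ?_)
  have : τ⁻¹ * (τ⁻¹ * a * τ) * τ = a := by
    rw [inv_eq_of_mul_eq_one_left hτ]
    calc τ * (τ * a * τ) * τ = (τ * τ) * a * (τ * τ) := by group
      _ = a := by simp [hτ]
  rw [this]
  exact Hz.refl _

theorem Hz.conj1 (a τ : G) (v : List G) (hτ : τ * τ = 1) :
    Hz (τ :: τ :: a :: v) ((a * τ * a⁻¹) :: (a * τ * a⁻¹) :: a :: v) :=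
  (Hz.pass a τ v hτ).symm.trans
    ((Hz.move a τ _).trans (Hz.cons _ (Hz.move a τ _)))

theorem sq_conj (a τ : G) (hτ : τ * τ = 1) : (a * τ * a⁻¹) * (a * τ * a⁻¹) = 1 := by
  calc (a * τ * a⁻¹) * (a * τ * a⁻¹) = a * (τ * τ) * a⁻¹ := by group
    _ = 1 := by simp [hτ]

theorem Hz.conjmem (v : List G) : ∀ (a τ : G), a ∈ v → τ * τ = 1 →
    Hz (τ :: τ :: v) ((a * τ * a⁻¹) :: (a * τ * a⁻¹) :: v) := by
  induction v with
  | nil => simp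
  | cons b v ih =>
    intro a τ ha hτ
    rcases List.mem_cons.1 ha with rfl | ha
    · exact Hz.conj1 _ _ _ hτ
    · exact (Hz.pass b τ v hτ).symm.trans ((Hz.cons b (ih a τ ha hτ)).trans
        (Hz.pass b _ v (sq_conj a τ hτ)))

theorem Hz.conjclosure (v : List G) (g : G) (hg : g ∈ Subgroup.closure {x | x ∈ v}) :
    ∀ τ : G, τ * τ = 1 → Hz (τ :: τ :: v) ((g * τ * g⁻¹) :: (g * τ * g⁻¹) :: v) := by
  induction hg using Subgroup.closure_induction with
  | mem x hx => exact fun τ h => Hz.conjmem v x τ hx h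
  | one => intro τ _; simpa using Hz.refl _
  | mul x y _ _ hx hy =>
    intro τ h
    have := (hy τ h).trans (hx _ (sq_conj y τ h))
    simpa [mul_assoc] using this
  | inv x _ hx =>
    intro τ h
    have := (hx (x⁻¹ * τ * x) (by simpa using sq_conj x⁻¹ τ h)).symm
    simpa [mul_assoc] using this

end hz

section conn
variable {α : Type*} [DecidableEq α]

open Equiv

def Conn (l : List (Perm α)) (x y : α) : Prop :=
  ∃ p ∈ Subgroup.closure {g | g ∈ l}, p x = y

theorem Conn.rfl' (l : List (Perm α)) (x : α) : Conn l x x := ⟨1, one_mem _, rfl⟩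

theorem Conn.symm {l : List (Perm α)} {x y : α} (h : Conn l x y) : Conn l y x := by
  obtain ⟨p, hp, rfl⟩ := h
  exact ⟨p⁻¹, inv_mem hp, by simp⟩

theorem Conn.trans {l : List (Perm α)} {x y z : α} (h : Conn l x y) (h' : Conn l y z) :
    Conn l x z := by
  obtain ⟨p, hp, rfl⟩ := h
  obtain ⟨q, hq, rfl⟩ := h'
  exact ⟨q * p, mul_mem hq hp, by simp⟩

theorem Conn.hz {l m : List (Perm α)} (h : Hz l m) {x y : α} (hc : Conn l x y) :
    Conn m x y := by
  unfold Conn at *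
  rwa [← h.closure]

theorem Conn.of_rel {l : List (Perm α)} {x y : α} (h : Conn l x y) (E : α → α → Prop)
    (hr : ∀ x, E x x) (hsy : ∀ x y, E x y → E y x) (ht : ∀ x y z, E x y → E y z → E x z)
    (hg : ∀ g ∈ l, ∀ x, E x (g x)) : E x y := by
  obtain ⟨p, hp, rfl⟩ := h
  induction hp using Subgroup.closure_induction generalizing x with
  | mem g hg' => exact hg g hg' x
  | one => exact hr _
  | mul p q _ _ h1 h2 => exact ht _ _ _ h2 h1
  | inv p _ h1 =>
    have := h1 (x := p⁻¹ x)
    have e : p (p⁻¹ x) = x := by simp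
    rw [e] at this
    exact hsy _ _ this

theorem Conn.cons {l : List (Perm α)} {a b x y : α} (h : Conn (swap a b :: l) x y) :
    Conn l x y ∨ (Conn l x a ∧ Conn l b y) ∨ (Conn l x b ∧ Conn l a y) := by
  have r := Conn.rfl' l
  have sy := @Conn.symm _ _ l
  have tr := @Conn.trans _ _ l
  refine h.of_rel (fun x y => Conn l x y ∨ (Conn l x a ∧ Conn l b y) ∨ (Conn l x b ∧ Conn l a y))
    (fun x => Or.inl (r x)) ?_ ?_ ?_
  · rintro x y (h | ⟨h1, h2⟩ | ⟨h1, h2⟩)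
    · exact Or.inl (sy h)
    · exact Or.inr (Or.inr ⟨sy h2, sy h1⟩)
    · exact Or.inr (Or.inl ⟨sy h2, sy h1⟩)
  · rintro x y z (h | ⟨h1, h2⟩ | ⟨h1, h2⟩) (h' | ⟨h1', h2'⟩ | ⟨h1', h2'⟩)
    · exact Or.inl (tr h h')
    · exact Or.inr (Or.inl ⟨tr h h1', h2'⟩)
    · exact Or.inr (Or.inr ⟨tr h h1', h2'⟩)
    · exact Or.inr (Or.inl ⟨h1, tr h2 h'⟩)
    · exact Or.inr (Or.inl ⟨h1, h2'⟩)
    · exact Or.inl (tr h1 h2')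
    · exact Or.inr (Or.inr ⟨h1, tr h2 h'⟩)
    · exact Or.inl (tr h1 h2')
    · exact Or.inr (Or.inr ⟨h1, h2'⟩)
  · intro g hg x
    rcases List.mem_cons.1 hg with rfl | hg
    · by_cases ha : x = a
      · subst ha
        simp only [swap_apply_left]
        exact Or.inr (Or.inl ⟨r _, r _⟩)
      · by_cases hb : x = b
        · subst hb
          simp only [swap_apply_right]
          exact Or.inr (Or.inr ⟨r _, r _⟩)
        · rw [swap_apply_of_ne_of_ne ha hb]
          exact Or.inl (r _)
    · exact Or.inl ⟨g, Subgroup.subset_closure hg, rfl⟩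

theorem Hz.swaps {l m : List (Perm α)} (h : Hz l m) :
    (∀ g ∈ l, g.IsSwap) ↔ (∀ g ∈ m, g.IsSwap) := by
  induction h with
  | refl => rfl
  | symm _ ih => exact ih.symm
  | trans _ _ h1 h2 => exact h1.trans h2
  | cons a _ ih => simp [ih]
  | move a b v =>
    have : (a * b * a⁻¹).IsSwap ↔ b.IsSwap := by
      constructor
      · intro h
        obtain ⟨x, y, hxy, h⟩ := h
        refine ⟨a⁻¹ x, a⁻¹ y, by simpa using hxy, ?_⟩
        have := Equiv.swap_apply_apply a⁻¹ x y
        rw [this, ← h]; simp [mul_assoc]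
      · intro h
        obtain ⟨x, y, hxy, rfl⟩ := h
        exact ⟨a x, a y, by simpa using hxy, by rw [Equiv.swap_apply_apply]⟩
    simp only [List.forall_mem_cons, this]
    tauto

theorem swap_conj_swap {x b y : α} (h1 : x ≠ y) (h2 : b ≠ y) :
    swap x b * swap b y * (swap x b)⁻¹ = swap x y := by
  rw [← Equiv.swap_apply_apply, swap_apply_right, swap_apply_of_ne_of_ne h1.symm h2.symm]

theorem exists_head : ∀ (n : ℕ) (l : List (Perm α)), l.length = n → (∀ g ∈ l, g.IsSwap) →
    ∀ x y : α, x ≠ y → Conn l x y → ∃ l', Hz l (swap x y :: l') := by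
  intro n
  induction n with
  | zero =>
    intro l hl _ x y hxy h
    obtain rfl := List.length_eq_zero_iff.1 hl
    exact absurd (h.of_rel Eq (fun _ => rfl) (fun _ _ h => h.symm)
      (fun _ _ _ h h' => h.trans h') (by simp)) hxy
  | succ n ih =>
    -- tail connected
    have tail : ∀ (e : Perm α) (r : List (Perm α)), r.length = n → (∀ g ∈ r, g.IsSwap) →
        ∀ x y : α, x ≠ y → Conn r x y → ∃ l', Hz (e :: r) (swap x y :: l') := by
      intro e r hr hs x y hxy hc
      obtain ⟨r', h⟩ := ih r hr hs x y hxy hc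
      exact ⟨_, (Hz.cons e h).trans (Hz.move_inv _ _ _)⟩
    -- head contains x
    have key : ∀ (x b : α) (r : List (Perm α)), r.length = n → (∀ g ∈ r, g.IsSwap) →
        ∀ y : α, x ≠ y → Conn (swap x b :: r) x y →
        ∃ l', Hz (swap x b :: r) (swap x y :: l') := by
      intro x b r hr hs y hxy hc
      by_cases hby : b = y
      · subst hby; exact ⟨r, Hz.refl _⟩
      by_cases h : Conn r x y
      · exact tail _ r hr hs x y hxy h
      have hb : Conn r b y := by
        rcases hc.cons with h' | h' | h'
        · exact absurd h' h
        · exact h'.2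
        · exact absurd h'.2 h
      obtain ⟨r', h'⟩ := ih r hr hs b y hby hb
      refine ⟨swap x b :: r', (Hz.cons _ h').trans ((Hz.move _ _ _).trans ?_)⟩
      rw [swap_conj_swap hxy hby]
      exact Hz.refl _
    intro l hl hs x y hxy hc
    match l, hl with
    | e :: r, hl =>
      have hr : r.length = n := by simpa using hl
      obtain ⟨⟨a, b, hab, rfl⟩, hs'⟩ := List.forall_mem_cons.1 hs
      by_cases h : Conn r x y
      · exact tail _ r hr hs' x y hxy h
      -- symmetric step
      have go : ∀ a b : α, a ≠ b → Conn (swap a b :: r) x y → Conn r x a → Conn r b y →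
          ∃ l', Hz (swap a b :: r) (swap x y :: l') := by
        intro a b hab hc hxa hby
        by_cases hxa' : x = a
        · subst hxa'
          exact key x b r hr hs' y hxy hc
        obtain ⟨r', h'⟩ := ih r hr hs' x a hxa' hxa
        have hxb : x ≠ b := by
          rintro rfl; exact h hby
        have hz : Hz (swap a b :: r) (swap x b :: swap a b :: r') := by
          refine (Hz.cons _ h').trans ((Hz.move _ _ _).trans ?_)
          have : swap a b * swap x a * (swap a b)⁻¹ = swap x b := by
            rw [swap_comm a b, swap_comm x a, swap_conj_swap hxb.symm (Ne.symm hxa'), swap_comm]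
          rw [this]
          exact Hz.refl _
        have hlen : (swap a b :: r').length = n := by
          have := h'.length
          simp at this ⊢; omega
        have hsw : ∀ g ∈ swap a b :: r', g.IsSwap := by
          have := (h'.swaps).1 hs'
          intro g hg
          rcases List.mem_cons.1 hg with rfl | hg
          · exact ⟨a, b, hab, rfl⟩
          · exact this g (List.mem_cons_of_mem _ hg)
        obtain ⟨l', hl'⟩ := key x b _ hlen hsw y hxy (hc.hz hz)
        exact ⟨l', hz.trans hl'⟩
      rcases hc.cons with h' | h' | h'
      · exact absurd h' h
      · exact go a b hab hc h'.1 h'.2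
      · rw [swap_comm] at hc ⊢
        exact go b a hab.symm hc h'.1 h'.2

theorem Hz.tail_swaps {l l' : List (Perm α)} {e : Perm α} (h : Hz l (e :: l'))
    (hs : ∀ g ∈ l, g.IsSwap) : ∀ g ∈ l', g.IsSwap :=
  fun g hg => h.swaps.1 hs g (List.mem_cons_of_mem _ hg)

/-- minimal-length factorization into swaps -/
def MinFac (l : List (Perm α)) : Prop :=
  ∀ q : List (Perm α), (∀ g ∈ q, g.IsSwap) → q.prod = l.prod → l.length ≤ q.length

theorem Conn.prod (l : List (Perm α)) (x : α) : Conn l x (l.prod x) :=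
  ⟨l.prod, list_prod_mem fun _ hx => Subgroup.subset_closure hx, rfl⟩

theorem minFac_hz : ∀ (n : ℕ) (l m : List (Perm α)), l.length = n → m.length = n →
    (∀ g ∈ l, g.IsSwap) → (∀ g ∈ m, g.IsSwap) → l.prod = m.prod → MinFac l → Hz l m := by
  intro n
  induction n with
  | zero =>
    intro l m hl hm _ _ _ _
    rw [List.length_eq_zero_iff.1 hl, List.length_eq_zero_iff.1 hm]
    exact Hz.refl _
  | succ n ih =>
    intro l m hl hm hls hms hp hmin
    have hne : l.prod ≠ 1 := by
      intro h
      have := hmin [] (by simp) (by simp [h])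
      simp [hl] at this
    obtain ⟨x, hx⟩ : ∃ x, l.prod x ≠ x := by
      by_contra! hcon
      exact hne (Equiv.ext hcon)
    obtain ⟨l', hl'⟩ := exists_head _ l rfl hls x (l.prod x) hx.symm (Conn.prod l x)
    obtain ⟨m', hm'⟩ := exists_head _ m rfl hms x (l.prod x) hx.symm (hp ▸ Conn.prod m x)
    have hlp := hl'.prod
    have hmp := hm'.prod
    have hll := hl'.length
    have hml := hm'.length
    simp only [List.prod_cons, List.length_cons] at hlp hmp hll hml
    refine hl'.trans ((Hz.cons _ (ih l' m' (by omega) (by omega) (hl'.tail_swaps hls)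
      (hm'.tail_swaps hms) ?_ ?_)).trans hm'.symm)
    · exact mul_left_cancel (hlp.symm.trans (hp.trans hmp))
    · intro q hq hqp
      have := hmin (swap x (l.prod x) :: q) (by
        intro g hg
        rcases List.mem_cons.1 hg with rfl | hg
        · exact ⟨_, _, hx.symm, rfl⟩
        · exact hq g hg) (by rw [List.prod_cons, hqp, ← hlp])
      simp only [List.length_cons] at this
      omega

theorem IsSwap.sq {g : Perm α} (h : g.IsSwap) : g * g = 1 := by
  obtain ⟨x, y, _, rfl⟩ := h
  simp

theorem sign_prod [Fintype α] (l : List (Perm α)) (h : ∀ g ∈ l, g.IsSwap) :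
    Perm.sign l.prod = (-1) ^ l.length := Perm.sign_prod_list_swap h

theorem nonmin_pair [Fintype α] : ∀ (l : List (Perm α)), (∀ g ∈ l, g.IsSwap) → ¬ MinFac l →
    ∃ τ l', τ.IsSwap ∧ Hz l (τ :: τ :: l') := by
  intro l
  induction l with
  | nil => intro _ h; exact absurd (fun q _ _ => by simp) h
  | cons e r ih =>
    intro hs hn
    obtain ⟨he, hr⟩ := List.forall_mem_cons.1 hs
    by_cases hmin : MinFac r
    · unfold MinFac at hn
      push Not at hn
      obtain ⟨q, hq, hqp, hql⟩ := hn
      have h1 := sign_prod q hq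
      rw [hqp, sign_prod _ hs] at h1
      simp only [List.length_cons] at h1 hql
      have hne : q.length ≠ r.length := by
        intro h
        rw [h, pow_succ] at h1
        rcases neg_one_pow_eq_or ℤˣ r.length with h2 | h2 <;> rw [h2] at h1 <;> 
          revert h1 <;> decide
      have hes : ∀ g ∈ e :: q, g.IsSwap := List.forall_mem_cons.2 ⟨he, hq⟩
      have hep : (e :: q).prod = r.prod := by
        rw [List.prod_cons, hqp, List.prod_cons, ← mul_assoc, IsSwap.sq he, one_mul]
      have := hmin (e :: q) hes hep
      simp only [List.length_cons] at this
      exact ⟨e, q, he, Hz.cons e (minFac_hz _ r (e :: q) rfl (by simp; omega) hr hes hep.symm hmin)⟩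
    · obtain ⟨τ, l', hτ, h⟩ := ih hr hmin
      exact ⟨τ, e :: l', hτ, (Hz.cons e h).trans (Hz.pass e τ l' (IsSwap.sq hτ))⟩

theorem sameCycle_join [Finite α] (π ρ : Perm α) (x y : α) (h : ρ = swap x y * π)
    (hn : ¬ π.SameCycle x y) : ρ.SameCycle x y := by
  by_contra hc
  have hπ : ∀ z, π z = swap x y (ρ z) := by intro z; simp [h]
  have hall : ∀ i : ℕ, π.SameCycle x ((ρ ^ i) x) := by
    intro i
    induction i with
    | zero => exact Perm.SameCycle.refl _ _
    | succ i ih =>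
      rw [pow_succ', Perm.mul_apply]
      by_cases h1 : ρ ((ρ ^ i) x) = x
      · rw [h1]
      · have h2 : ρ ((ρ ^ i) x) ≠ y := by
          intro h2
          exact hc ⟨(i + 1 : ℕ), by rw [zpow_natCast, pow_succ', Perm.mul_apply, h2]⟩
        have := hπ ((ρ ^ i) x)
        rw [swap_apply_of_ne_of_ne h1 h2] at this
        rw [← this]
        exact Perm.sameCycle_apply_right.2 ih
  obtain ⟨i, hi⟩ : ∃ i : ℕ, (ρ ^ i) x = ρ⁻¹ x := by
    have : ρ.SameCycle x (ρ⁻¹ x) := ⟨-1, by simp⟩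
    obtain ⟨i, _, hi⟩ := this.exists_pow_eq'
    exact ⟨i, hi⟩
  have h1 := hall i
  rw [hi] at h1
  have h2 := hπ (ρ⁻¹ x)
  have e : ρ (ρ⁻¹ x) = x := by simp
  rw [e, swap_apply_left] at h2
  exact hn (h2 ▸ Perm.sameCycle_apply_right.2 h1)

theorem Conn.of_sameCycle {l : List (Perm α)} {x y : α} (h : l.prod.SameCycle x y) :
    Conn l x y := by
  obtain ⟨i, hi⟩ := h
  exact ⟨l.prod ^ i, zpow_mem (list_prod_mem fun _ hx => Subgroup.subset_closure hx) i, hi⟩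

theorem trans_tail [Finite α] {l l' : List (Perm α)} {x y : α} (h : Hz l (swap x y :: l'))
    (hn : ¬ l.prod.SameCycle x y) (ht : ∀ x y, Conn l x y) : ∀ x y, Conn l' x y := by
  have hxy : Conn l' x y := Conn.of_sameCycle (sameCycle_join l.prod l'.prod x y
    (by rw [h.prod, List.prod_cons, ← mul_assoc]; simp) hn)
  intro u v
  rcases ((ht u v).hz h).cons with h' | h' | h'
  · exact h'
  · exact h'.1.trans (hxy.trans h'.2)
  · exact h'.1.trans (hxy.symm.trans h'.2)

theorem closure_top [Finite α] {l : List (Perm α)} (hs : ∀ g ∈ l, g.IsSwap)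
    (ht : ∀ x y, Conn l x y) : ∀ x y, x ≠ y → swap x y ∈ Subgroup.closure {g | g ∈ l} := by
  intro x y hxy
  obtain ⟨l', h⟩ := exists_head _ l rfl hs x y hxy (ht x y)
  rw [h.closure]
  exact Subgroup.subset_closure (by simp)

/-- all swaps are conjugate by products of swaps -/
theorem swap_pair_move [Finite α] {l : List (Perm α)} (hs : ∀ g ∈ l, g.IsSwap)
    (ht : ∀ x y, Conn l x y) {σ τ : Perm α} (hσ : σ.IsSwap) (hτ : τ.IsSwap) :
    Hz (σ :: σ :: l) (τ :: τ :: l) := by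
  have htop : Subgroup.closure {g | g ∈ l} = ⊤ := by
    rw [eq_top_iff, ← Perm.closure_isSwap, Subgroup.closure_le]
    rintro g ⟨x, y, hxy, rfl⟩
    exact closure_top hs ht x y hxy
  have hc : IsConj σ τ := by
    obtain ⟨x, y, hxy, rfl⟩ := hσ
    obtain ⟨a, b, hab, rfl⟩ := hτ
    exact Perm.isConj_swap hxy hab
  obtain ⟨g, rfl⟩ := isConj_iff.1 hc
  exact Hz.conjclosure l g (by rw [htop]; trivial) σ (IsSwap.sq hσ)

theorem main_list [Fintype α] : ∀ (n : ℕ) (l m : List (Perm α)), l.length = n → m.length = n →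
    (∀ g ∈ l, g.IsSwap) → (∀ g ∈ m, g.IsSwap) → l.prod = m.prod →
    (∀ x y, Conn l x y) → (∀ x y, Conn m x y) → Hz l m := by
  intro n
  induction n using Nat.strong_induction_on with
  | _ n ih =>
  intro l m hl hm hls hms hp hlt hmt
  by_cases hcyc : ∀ x y, l.prod.SameCycle x y
  · by_cases hmin : MinFac l
    · exact minFac_hz n l m hl hm hls hms hp hmin
    · have hmin' : ¬ MinFac m := by
        intro h
        apply hmin
        intro q hq hqp
        have := h q hq (hqp.trans hp)
        omega
      obtain ⟨τ, l', hτ, hl'⟩ := nonmin_pair l hls hmin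
      obtain ⟨σ, m', hσ, hm'⟩ := nonmin_pair m hms hmin'
      have hlp := hl'.prod
      have hmp := hm'.prod
      have hll := hl'.length
      have hml := hm'.length
      simp only [List.prod_cons, List.length_cons, ← mul_assoc, IsSwap.sq hτ, IsSwap.sq hσ,
        one_mul] at hlp hmp hll hml
      have hls' : ∀ g ∈ l', g.IsSwap := fun g hg => hl'.swaps.1 hls g (by simp [hg])
      have hms' : ∀ g ∈ m', g.IsSwap := fun g hg => hm'.swaps.1 hms g (by simp [hg])
      have hlt' : ∀ x y, Conn l' x y := fun x y => Conn.of_sameCycle (hlp ▸ hcyc x y)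
      have hmt' : ∀ x y, Conn m' x y := fun x y => Conn.of_sameCycle (hmp ▸ hp ▸ hcyc x y)
      have := ih (n - 2) (by omega) l' m' (by omega) (by omega) hls' hms'
        (hlp.symm.trans (hp.trans hmp)) hlt' hmt'
      exact hl'.trans ((Hz.cons _ (Hz.cons _ this)).trans
        ((swap_pair_move hms' hmt' hτ hσ).trans hm'.symm))
  · push Not at hcyc
    obtain ⟨x, y, hxy⟩ := hcyc
    have hne : x ≠ y := by rintro rfl; exact hxy (Perm.SameCycle.refl _ _)
    obtain ⟨l', hl'⟩ := exists_head _ l rfl hls x y hne (hlt x y)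
    obtain ⟨m', hm'⟩ := exists_head _ m rfl hms x y hne (hmt x y)
    have hlp := hl'.prod
    have hmp := hm'.prod
    have hll := hl'.length
    have hml := hm'.length
    simp only [List.prod_cons, List.length_cons] at hlp hmp hll hml
    exact hl'.trans ((Hz.cons _ (ih (n - 1) (by omega) l' m' (by omega) (by omega)
      (hl'.tail_swaps hls) (hm'.tail_swaps hms)
      (mul_left_cancel (hlp.symm.trans (hp.trans hmp)))
      (trans_tail hl' hxy hlt) (trans_tail hm' (hp ▸ hxy) hmt))).trans hm'.symm)

end conn

section transfer
variable {G : Type*} [Group G]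

theorem hmove_zero {n : ℕ} (s : Fin (n + 2) → G) :
    List.ofFn (hmove 0 (by omega) s) =
      (s 0 * s 1 * (s 0)⁻¹) :: s 0 :: List.ofFn (fun i : Fin n => s i.succ.succ) := by
  rw [List.ofFn_succ, List.ofFn_succ]
  simp [hmove]

theorem hmove_succ {n : ℕ} (i : ℕ) (hi : i + 1 < n) (s : Fin (n + 1) → G) :
    hmove (i + 1) (by omega) s = Fin.cons (s 0) (hmove i hi (fun j => s j.succ)) := by
  funext j
  refine Fin.cases ?_ (fun j => ?_) j
  · simp [hmove]
  · rw [Fin.cons_succ]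
    simp [hmove, Fin.succ]

theorem hz_hmove : ∀ (i n : ℕ) (hi : i + 1 < n) (s : Fin n → G),
    Hz (List.ofFn s) (List.ofFn (hmove i hi s)) := by
  intro i
  induction i with
  | zero =>
    intro n hi s
    obtain ⟨n, rfl⟩ : ∃ k, n = k + 2 := ⟨n - 2, by omega⟩
    rw [hmove_zero, List.ofFn_succ, List.ofFn_succ]
    exact Hz.move _ _ _
  | succ i ih =>
    intro n hi s
    obtain ⟨n, rfl⟩ : ∃ k, n = k + 1 := ⟨n - 1, by omega⟩
    rw [hmove_succ i (by omega), List.ofFn_succ, List.ofFn_cons]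
    exact Hz.cons _ (ih _ _ _)

theorem HurwitzEquiv.hz {n : ℕ} {s t : Fin n → G} (h : HurwitzEquiv s t) :
    Hz (List.ofFn s) (List.ofFn t) := by
  induction h with
  | refl => exact Hz.refl _
  | tail _ h ih =>
    obtain ⟨i, hi, rfl | rfl⟩ := h
    · exact ih.trans (hz_hmove _ _ _ _)
    · exact ih.trans (hz_hmove _ _ _ _).symm

theorem hstep.symm {n : ℕ} {s t : Fin n → G} (h : hstep s t) : hstep t s := by
  obtain ⟨i, hi, h⟩ := h
  exact ⟨i, hi, h.symm⟩

theorem HurwitzEquiv.cons {n : ℕ} (a : G) {s t : Fin n → G} (h : HurwitzEquiv s t) :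
    HurwitzEquiv (Fin.cons a s : Fin (n + 1) → G) (Fin.cons a t) := by
  refine Relation.ReflTransGen.lift (fun s => (Fin.cons a s : Fin (n + 1) → G)) ?_ _ _ h
  rintro s t ⟨i, hi, h⟩
  refine ⟨i + 1, by omega, ?_⟩
  rw [hmove_succ i hi, hmove_succ i hi]
  rcases h with rfl | rfl
  · left; simp
  · right; simp

theorem Hz.hurwitz {l m : List G} (h : Hz l m) : ∀ (n : ℕ) (s t : Fin n → G),
    List.ofFn s = l → List.ofFn t = m → HurwitzEquiv s t := by
  induction h with
  | refl l =>
    intro n s t hs ht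
    rw [List.ofFn_injective (hs.trans ht.symm)]
    exact Relation.ReflTransGen.refl
  | symm _ ih =>
    intro n s t hs ht
    have hr := ih n t s ht hs
    unfold HurwitzEquiv at hr ⊢
    clear hs ht ih
    induction hr with
    | refl => exact Relation.ReflTransGen.refl
    | tail _ h ih' => exact Relation.ReflTransGen.head h.symm ih'
  | @trans l m k h1 h2 ih1 ih2 =>
    intro n s t hs ht
    have hlen : m.length = n := by rw [← h1.length, ← hs]; simp
    subst hlen
    exact Relation.ReflTransGen.trans (ih1 _ s m.get hs (List.ofFn_get m))
      (ih2 _ m.get t (List.ofFn_get m) ht)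
  | @cons a l m h ih =>
    intro n s t hs ht
    obtain ⟨n, rfl⟩ : ∃ k, n = k + 1 := ⟨l.length, by simpa using congrArg List.length hs⟩
    rw [List.ofFn_succ, List.cons.injEq] at hs ht
    have := (ih n _ _ hs.2 ht.2).cons a
    have e1 : (Fin.cons a (fun i => s i.succ) : Fin (n + 1) → G) = s := by
      rw [← hs.1]; exact Fin.cons_self_tail s
    have e2 : (Fin.cons a (fun i => t i.succ) : Fin (n + 1) → G) = t := by
      rw [← ht.1]; exact Fin.cons_self_tail t
    rwa [e1, e2] at this
  | move a b v =>
    intro n s t hs ht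
    obtain ⟨n, rfl⟩ : ∃ k, n = k + 2 := ⟨v.length, by simpa using congrArg List.length hs⟩
    refine Relation.ReflTransGen.single ⟨0, by omega, Or.inl ?_⟩
    apply List.ofFn_injective
    rw [hmove_zero, ht]
    rw [List.ofFn_succ, List.ofFn_succ] at hs
    simp only [List.cons.injEq] at hs
    obtain ⟨rfl, rfl, rfl⟩ := hs
    rfl

theorem prod_conj {n : ℕ} (g : G) (s : Fin n → G) :
    (List.ofFn (fun j => g * s j * g⁻¹)).prod = g * (List.ofFn s).prod * g⁻¹ := by
  have := map_list_prod (MulAut.conj g) (List.ofFn s)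
  rw [List.map_ofFn] at this
  exact this.symm

end transfer

theorem conn_ofFn {d n : ℕ} (s : Fin n → Equiv.Perm (Fin d))
    (h : ∀ x y : Fin d, ∃ p ∈ Subgroup.closure (Set.range s), p x = y) :
    ∀ x y, Conn (List.ofFn s) x y := by
  have : {g | g ∈ List.ofFn s} = Set.range s := by ext; simp [List.mem_ofFn]
  unfold Conn
  rwa [this]

theorem conj_closure {G : Type*} [Group G] {n : ℕ} (g p : G) (s : Fin n → G)
    (hp : p ∈ Subgroup.closure (Set.range s)) :
    g * p * g⁻¹ ∈ Subgroup.closure (Set.range (fun j => g * s j * g⁻¹)) := by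
  induction hp using Subgroup.closure_induction with
  | mem x hx =>
    obtain ⟨j, rfl⟩ := hx
    exact Subgroup.subset_closure ⟨j, rfl⟩
  | one => simp
  | mul x y _ _ hx hy =>
    have := mul_mem hx hy
    simpa [mul_assoc] using this
  | inv x _ hx =>
    have := inv_mem hx
    simpa [mul_assoc] using this

/-- Classification of simple branched covers of the disc
(Mulazzani–Piergallini, Berstein–Edmonds), algebraic form: two transitive
`n`-tuples of transpositions in `S_d` are related by a finite composition of
Hurwitz moves and their inverses together with a simultaneous conjugation if
and only if their total monodromies are conjugate in `S_d`. -/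
theorem hurwitz_conj_equiv_iff_isConj_prod (d n : ℕ) (hd : 2 ≤ d)
    (s t : Fin n → Equiv.Perm (Fin d))
    (hs : ∀ j, (s j).IsSwap) (ht : ∀ j, (t j).IsSwap)
    (hstrans : ∀ x y : Fin d, ∃ p ∈ Subgroup.closure (Set.range s), p x = y)
    (httrans : ∀ x y : Fin d, ∃ p ∈ Subgroup.closure (Set.range t), p x = y) :
    (∃ g : Equiv.Perm (Fin d), HurwitzEquiv (fun j => g * s j * g⁻¹) t)
      ↔ IsConj (List.ofFn s).prod (List.ofFn t).prod := by
  constructor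
  · rintro ⟨g, h⟩
    have := h.hz.prod
    rw [prod_conj] at this
    exact isConj_iff.2 ⟨g, this⟩
  · intro h
    obtain ⟨g, hg⟩ := isConj_iff.1 h
    refine ⟨g, Hz.hurwitz (main_list n _ _ (by simp) (by simp) ?_ ?_ ?_ ?_ ?_) n _ _ rfl rfl⟩
    · intro p hp
      obtain ⟨j, rfl⟩ := (List.mem_ofFn' _ _).1 hp
      obtain ⟨x, y, hxy, h⟩ := hs j
      exact ⟨g x, g y, by simpa using hxy, by rw [Equiv.swap_apply_apply, ← h]⟩
    · intro p hp
      obtain ⟨j, rfl⟩ := (List.mem_ofFn' _ _).1 hp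
      exact ht j
    · rw [prod_conj, hg]
    · apply conn_ofFn
      intro x y
      obtain ⟨p, hp, h⟩ := hstrans (g⁻¹ x) (g⁻¹ y)
      exact ⟨_, conj_closure g p s hp, by
        rw [Equiv.Perm.mul_apply, Equiv.Perm.mul_apply, h]; simp⟩
    · exact conn_ofFn t httrans
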